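/- arXiv:1804.10263 — 11 statements merged into one kernel-verified Lean document; each statement's English description precedes it below -/
import Mathlib

section
/- Let (X,d) be a metric space and A, B ⊆ X. Then the following are equivalent: (1) there exists ε < ∞ such that for every metrically bounded set D ⊆ X, d(A \ D, B \ D) < ε; (2) there exists ε < ∞ such that for every metrically bounded set D ⊆ X there exist a ∈ A \ D and b ∈ B \ D with d(a,b) < ε; (3) there exist unbounded subsets A₁ ⊆ A and B₁ ⊆ B whose Hausdorff distance is finite. -/
/-!
Call the three conditions, in the order of the statement, the infimum, pair and Hausdorff
conditions. An infimum is `< ε` exactly when some pair has distance `< ε` (`eSetDist_lt_iff`; an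
infimum over no pairs is `∞`), so the first two differ only in whether `ε` is an extended or a
real number.

From pairs to Hausdorff, take all points of `A` with an `ε`-close partner in `B`, and all points
of `B` with an `ε`-close partner in `A`. Each set lies in the `ε`-neighborhood of the other, and
neither is bounded: the pair condition with that set as `D` would give a pair avoiding the set
to which it must contribute a point.

From Hausdorff to pairs, given a bounded `D`, the unbounded `A₁` has a point outside the bounded
set `D ∪ thickening ε D`; any point of `B₁` within `ε` of it lies outside `D`.
-/

open Metric Bornology
open scoped ENNReal

/-- `d(S,T) = inf {d(x,y) : x ∈ S, y ∈ T}`, with `inf ∅ = ∞`. -/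
noncomputable def eSetDist {X : Type*} [MetricSpace X] (S T : Set X) : ℝ≥0∞ :=
  ⨅ x ∈ S, ⨅ y ∈ T, edist x y

/-- `S` and `T` have finite Hausdorff distance: there is `ε` with `S` contained in the
open `ε`-neighborhood of `T` and vice versa. -/
def HausFinite {X : Type*} [MetricSpace X] (S T : Set X) : Prop :=
  ∃ ε : ℝ, (S ⊆ ⋃ y ∈ T, Metric.ball y ε) ∧ (T ⊆ ⋃ x ∈ S, Metric.ball x ε)

theorem eSetDist_lt_iff {X : Type*} [MetricSpace X] {S T : Set X} {ε : ℝ≥0∞} :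
    eSetDist S T < ε ↔ ∃ x ∈ S, ∃ y ∈ T, edist x y < ε := by
  simp only [eSetDist, iInf_lt_iff, exists_prop]

/-- the three characterizations of coarse closeness are equivalent. -/
theorem metric_coarse_proximity_equiv_conditions {X : Type*} [MetricSpace X] (A B : Set X) :
    ((∃ ε : ℝ≥0∞, ε < ⊤ ∧ ∀ D : Set X, IsBounded D → eSetDist (A \ D) (B \ D) < ε) ↔
      (∃ ε : ℝ, ∀ D : Set X, IsBounded D → ∃ a ∈ A \ D, ∃ b ∈ B \ D, dist a b < ε)) ∧
    ((∃ ε : ℝ, ∀ D : Set X, IsBounded D → ∃ a ∈ A \ D, ∃ b ∈ B \ D, dist a b < ε) ↔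
      (∃ A₁ ⊆ A, ∃ B₁ ⊆ B, ¬ IsBounded A₁ ∧ ¬ IsBounded B₁ ∧ HausFinite A₁ B₁)) := by
  refine ⟨⟨?_, ?_⟩, ?_, ?_⟩
  · rintro ⟨ε, hε, h⟩
    refine ⟨ε.toReal, fun D hD => ?_⟩
    obtain ⟨a, ha, b, hb, hab⟩ := eSetDist_lt_iff.1 (h D hD)
    refine ⟨a, ha, b, hb, ?_⟩
    rwa [edist_dist, ENNReal.ofReal_lt_iff_lt_toReal dist_nonneg hε.ne] at hab
  · rintro ⟨ε, h⟩
    refine ⟨ENNReal.ofReal ε, ENNReal.ofReal_lt_top, fun D hD => ?_⟩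
    obtain ⟨a, ha, b, hb, hab⟩ := h D hD
    exact eSetDist_lt_iff.2 ⟨a, ha, b, hb, edist_lt_ofReal.2 hab⟩
  · rintro ⟨ε, h⟩
    -- Were either set of `ε`-partners bounded, removing it would leave no `ε`-close pair.
    refine ⟨{a ∈ A | ∃ b ∈ B, dist a b < ε}, Set.sep_subset _ _,
      {b ∈ B | ∃ a ∈ A, dist a b < ε}, Set.sep_subset _ _, fun hbd => ?_, fun hbd => ?_,
      ε, ?_, ?_⟩
    · obtain ⟨a, ha, b, hb, hab⟩ := h _ hbd
      exact ha.2 ⟨ha.1, b, hb.1, hab⟩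
    · obtain ⟨a, ha, b, hb, hab⟩ := h _ hbd
      exact hb.2 ⟨hb.1, a, ha.1, hab⟩
    · rintro a ⟨ha, b, hb, hab⟩
      exact Set.mem_biUnion (x := b) ⟨hb, a, ha, hab⟩ (mem_ball.2 hab)
    · rintro b ⟨hb, a, ha, hab⟩
      exact Set.mem_biUnion (x := a) ⟨ha, b, hb, hab⟩ (mem_ball'.2 hab)
  · rintro ⟨A₁, hA, B₁, hB, hA₁, -, ε, hAB, -⟩
    refine ⟨ε, fun D hD => ?_⟩
    -- A point of `A₁` outside the `ε`-thickening of `D` has its `ε`-partner outside `D`.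
    have hns : ¬ A₁ ⊆ D ∪ thickening ε D := fun hs => hA₁ ((hD.union hD.thickening).subset hs)
    obtain ⟨a, ha, haD⟩ := Set.not_subset.1 hns
    obtain ⟨b, hb, hab⟩ := Set.mem_iUnion₂.1 (hAB ha)
    exact ⟨a, ⟨hA ha, fun h => haD (Or.inl h)⟩, b,
      ⟨hB hb, fun h => haD (Or.inr (mem_thickening_iff.2 ⟨b, h, hab⟩))⟩, hab⟩
end

section
/- Let (X,d) be a metric space and A, B, C ⊆ X. Then (A ∪ B) 𝐛 C if and only if A 𝐛 C or B 𝐛 C. -/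
/-!
Enlarging a set can only decrease its distance to another, so closeness of `A` or of `B` to `C`
gives closeness of `A ∪ B`. Conversely, if `A ∪ B` is close to `C` with bound `ε`, the same `ε`
works for `A` or for `B`: bounded sets `D`, `E` witnessing the failure for `A` and `B` would have
a bounded union, outside which some pair of points of `A ∪ B` and `C` is at distance less
than `ε`; its first point lies in `A` or `B`, contradicting the choice of `D` or `E`.
-/

open Metric Bornology
open scoped ENNReal

/-- `A 𝐛 B`: there is `ε < ∞` such that for every metrically bounded `D`,
`d(A \ D, B \ D) < ε`. -/
def CClose {X : Type*} [MetricSpace X] (A B : Set X) : Prop :=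
  ∃ ε : ℝ≥0∞, ε < ⊤ ∧ ∀ D : Set X, IsBounded D → eSetDist (A \ D) (B \ D) < ε

/-- A bound on the distance of a union from a third set is inherited by one of the two pieces,
also when different sets `D`, `E` are removed: a pair realizing the bound outside `D ∪ E`
has its first point in one of the pieces. -/
theorem eSetDist_lt_or_of_union {X : Type*} [MetricSpace X] {A B C D E : Set X} {ε : ℝ≥0∞}
    (h : eSetDist ((A ∪ B) \ (D ∪ E)) (C \ (D ∪ E)) < ε) :
    eSetDist (A \ D) (C \ D) < ε ∨ eSetDist (B \ E) (C \ E) < ε := by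
  simp only [eSetDist, iInf_lt_iff] at h ⊢
  obtain ⟨x, ⟨hx, hxD⟩, y, ⟨hy, hyD⟩, hxy⟩ := h
  simp only [Set.mem_union, not_or] at hx hxD hyD
  rcases hx with hx | hx
  · exact Or.inl ⟨x, ⟨hx, hxD.1⟩, y, ⟨hy, hyD.1⟩, hxy⟩
  · exact Or.inr ⟨x, ⟨hx, hxD.2⟩, y, ⟨hy, hyD.2⟩, hxy⟩

theorem CClose.mono_left {X : Type*} [MetricSpace X] {A A' C : Set X} (h : A ⊆ A')
    (hA : CClose A C) : CClose A' C := by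
  obtain ⟨ε, hε, H⟩ := hA
  refine ⟨ε, hε, fun D hD => lt_of_le_of_lt ?_ (H D hD)⟩
  exact biInf_mono fun x hx => ⟨h hx.1, hx.2⟩

/-- the union axiom for the metric coarse proximity. -/
theorem metric_coarse_proximity_union {X : Type*} [MetricSpace X] (A B C : Set X) :
    CClose (A ∪ B) C ↔ CClose A C ∨ CClose B C := by
  constructor
  · rintro ⟨ε, hε, H⟩
    by_contra! hcon
    simp only [CClose, not_exists, not_and, not_forall] at hcon
    -- If `ε` fails for `A` at `D` and for `B` at `E`, then it fails for `A ∪ B` at `D ∪ E`.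
    obtain ⟨D, hD, hAD⟩ := hcon.1 ε hε
    obtain ⟨E, hE, hBE⟩ := hcon.2 ε hε
    exact (eSetDist_lt_or_of_union (H (D ∪ E) (hD.union hE))).elim hAD hBE
  · rintro (h | h)
    · exact h.mono_left Set.subset_union_left
    · exact h.mono_left Set.subset_union_right
end

section
/- Let (X,d) be a metric space and A, B ⊆ X. If it is not the case that A 𝐛 B, then there exists a subset E ⊆ X such that it is not the case that A 𝐛 E and it is not the case that (X \ E) 𝐛 B. -/
/-!
The separating set is `E = {x | d(x, B) ≤ d(x, A)}`, the points at least as close to `B` as to `A`.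
If `a ∈ A` and `x ∈ E` satisfy `d(a, x) < r`, then `d(x, B) ≤ d(x, A) < r`, so some `b ∈ B` has
`d(a, b) < 2r`. As `A` and `B` are not close, there is a bounded `D` outside of which `A` and `B`
are `2r` apart; hence `a` or `b` lies in `D`, and in either case `a` lies in the bounded
`2r`-neighbourhood of `D`. So `A` and `E` are at distance at least `r` outside that neighbourhood.
On `Eᶜ` the roles of `A` and `B` are exchanged, and the same argument applies.
-/

open Metric Bornology
open scoped ENNReal

/-- Non-closeness in terms of real distances between points: outside a suitable bounded set, `A` and
`B` are as far apart as desired. -/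
theorem not_cClose_iff {X : Type*} [MetricSpace X] {A B : Set X} :
    ¬ CClose A B ↔ ∀ r : ℝ, 0 < r → ∃ D : Set X, IsBounded D ∧
      ∀ a ∈ A \ D, ∀ b ∈ B \ D, r ≤ dist a b := by
  have key : ∀ (r : ℝ) (S T : Set X), ENNReal.ofReal r ≤ eSetDist S T ↔
      ∀ a ∈ S, ∀ b ∈ T, r ≤ dist a b := by
    intro r S T
    simp only [eSetDist, le_iInf_iff, edist_dist, ENNReal.ofReal_le_ofReal_iff dist_nonneg]
  constructor
  · intro h r _
    by_contra! hc
    refine h ⟨ENNReal.ofReal r, ENNReal.ofReal_lt_top, fun D hD => ?_⟩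
    by_contra! hle
    obtain ⟨a, ha, b, hb, hab⟩ := hc D hD
    exact absurd ((key _ _ _).1 hle a ha b hb) (not_le.2 hab)
  · rintro h ⟨ε, hε, H⟩
    -- `ε` may be `0`, whereas the radius has to be positive.
    obtain ⟨D, hD, hr⟩ := h (ε.toReal + 1) (by positivity)
    have h1 := ((key _ _ _).2 hr).trans_lt (H D hD)
    have h2 : ε ≤ ENNReal.ofReal (ε.toReal + 1) := by
      rw [ENNReal.le_ofReal_iff_toReal_le hε.ne (by positivity)]
      linarith
    exact absurd h2 (not_le.2 h1)

theorem not_cClose_symm {X : Type*} [MetricSpace X] {A B : Set X}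
    (h : ¬ CClose A B) : ¬ CClose B A := by
  rw [not_cClose_iff] at h ⊢
  intro r hr
  obtain ⟨D, hD, H⟩ := h r hr
  exact ⟨D, hD, fun a ha b hb => dist_comm a b ▸ H b hb a ha⟩

/-- A set all of whose points are at least as close to `B` as to `A` is not coarsely close to `A`
if `B` is not. -/
theorem not_cClose_of_infEDist_le {X : Type*} [MetricSpace X] {A B F : Set X}
    (h : ¬ CClose A B) (hF : ∀ x ∈ F, infEDist x B ≤ infEDist x A) : ¬ CClose A F := by
  rw [not_cClose_iff] at h ⊢
  intro r hr
  obtain ⟨D, hD, H⟩ := h (2 * r) (by positivity)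
  refine ⟨thickening (2 * r) D, hD.thickening, fun a ha x hx => ?_⟩
  by_contra! hax
  have hxA : infEDist x A < ENNReal.ofReal r := by
    refine (infEDist_le_edist_of_mem ha.1).trans_lt ?_
    rw [edist_comm, edist_dist]
    exact (ENNReal.ofReal_lt_ofReal_iff hr).2 hax
  obtain ⟨b, hb, hxb⟩ := infEDist_lt_iff.1 ((hF x hx.1).trans_lt hxA)
  rw [edist_dist, ENNReal.ofReal_lt_ofReal_iff hr] at hxb
  have hab : dist a b < 2 * r := by
    linarith [dist_triangle a x b]
  have haD : a ∉ D := fun h => ha.2 (self_subset_thickening (by positivity) D h)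
  have hbD : b ∉ D := fun h => ha.2 (mem_thickening_iff.2 ⟨b, h, hab⟩)
  exact absurd (H a ⟨ha.1, haD⟩ b ⟨hb, hbD⟩) (not_le.2 hab)

/-- the strong axiom for the metric coarse proximity. -/
theorem metric_coarse_proximity_strong {X : Type*} [MetricSpace X] (A B : Set X)
    (h : ¬ CClose A B) :
    ∃ E : Set X, ¬ CClose A E ∧ ¬ CClose Eᶜ B := by
  refine ⟨{x | infEDist x B ≤ infEDist x A}, not_cClose_of_infEDist_le h fun x hx => hx, ?_⟩
  exact not_cClose_symm (not_cClose_of_infEDist_le (not_cClose_symm h) fun x hx =>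
    (not_le.1 (Set.notMem_ofPred_iff.1 hx)).le)
end

section
/- Let (X,d) be a metric space and A, B ⊆ X. Then B is an asymptotic neighborhood of A if and only if it is not the case that A 𝐛 (X \ B), i.e., B is a coarse neighborhood of A with respect to the metric coarse proximity. -/
/-!
If `d(A \ B(x₀,r), X \ B)` tends to `∞`, then for each `ε < ∞` a large ball serves as a bounded set
violating `A 𝐛 (X \ B)`, because removing points from a set only increases distances.

Conversely, fix any `x₀` and a bound `M`, and let `D ⊆ B(x₀,R)` be a bounded set with
`d(A \ D, (X \ B) \ D) ≥ M + 1`. For `r ≥ R + M + 1`, a point of `A` outside `B(x₀,r)` is at distance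
at least `M + 1` from the points of `X \ B` outside `D` by the choice of `D`, and from those
inside `D` by the triangle inequality.
-/

open Metric Bornology
open scoped ENNReal

theorem le_eSetDist_iff {X : Type*} [MetricSpace X] {S T : Set X} {c : ℝ≥0∞} :
    c ≤ eSetDist S T ↔ ∀ x ∈ S, ∀ y ∈ T, c ≤ edist x y := by
  simp only [eSetDist, le_iInf_iff]

/-- B is an asymptotic neighborhood of A iff B is a coarse neighborhood
of A with respect to the metric coarse proximity. -/
theorem asymptotic_nbhd_iff_coarse_nbhd {X : Type*} [MetricSpace X] [Nonempty X]
    (A B : Set X) :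
    (∃ x₀ : X, Filter.Tendsto (fun r : ℝ => eSetDist (A \ Metric.ball x₀ r) Bᶜ)
      Filter.atTop (nhds ⊤)) ↔ ¬ CClose A Bᶜ := by
  constructor
  · rintro ⟨x₀, h⟩ ⟨ε, hε, hc⟩
    obtain ⟨r, hr⟩ := (h.eventually (lt_mem_nhds hε)).exists
    have hle : eSetDist (A \ ball x₀ r) Bᶜ ≤ eSetDist (A \ ball x₀ r) (Bᶜ \ ball x₀ r) :=
      le_eSetDist_iff.2 fun x hx y hy => le_eSetDist_iff.1 le_rfl x hx y hy.1
    exact lt_asymm (hr.trans_le hle) (hc _ isBounded_ball)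
  · intro h
    obtain ⟨x₀⟩ := ‹Nonempty X›
    refine ⟨x₀, ENNReal.tendsto_nhds_top_iff_nnreal.2 fun M => ?_⟩
    simp only [CClose, not_exists, not_and, not_forall, not_lt] at h
    obtain ⟨D, hD, hDM⟩ := h ((M + 1 : NNReal) : ℝ≥0∞) ENNReal.coe_lt_top
    obtain ⟨R, hR⟩ := hD.subset_ball x₀
    filter_upwards [Filter.eventually_ge_atTop (R + (M + 1 : NNReal))] with r hr
    have hM : (M : ℝ≥0∞) < ((M + 1 : NNReal) : ℝ≥0∞) :=
      ENNReal.coe_lt_coe.2 (lt_add_one M)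
    refine hM.trans_le (le_eSetDist_iff.2 fun a ha b hb => ?_)
    have har : r ≤ dist a x₀ := not_lt.1 ha.2
    have hM0 : (0 : ℝ) ≤ (M + 1 : NNReal) := NNReal.coe_nonneg _
    by_cases hbD : b ∈ D
    · have hbR : dist b x₀ < R := hR hbD
      have htri := dist_triangle a b x₀
      rw [edist_nndist, ENNReal.coe_le_coe, ← NNReal.coe_le_coe, coe_nndist]
      linarith
    · refine le_eSetDist_iff.1 hDM a ⟨ha.1, fun haD => ?_⟩ b ⟨hb, hbD⟩
      have haR : dist a x₀ < R := hR haD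
      linarith
end

section
/- Let (X,d₁) and (Y,d₂) be metric spaces and h : X → Y a coarse map. If A, B ⊆ Y satisfy A ≪ B with respect to the metric coarse proximity on Y, then h⁻¹(A) ≪ h⁻¹(B) with respect to the metric coarse proximity on X. -/
/-!
Contrapositively, if `h ⁻¹' A` and `h ⁻¹' Bᶜ` come within `ε` of each other outside every
bounded set, then so do `A` and `Bᶜ` within the bound `S` that bornologousness gives for `ε`:
for bounded `D ⊆ Y` properness makes `h ⁻¹' D` bounded, and the image under `h` of a pair of
`ε`-close points found outside `h ⁻¹' D` is a pair of `S`-close points outside `D`.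
-/

open Metric Bornology
open scoped ENNReal

/-- coarse maps copreserve coarse neighborhoods. -/
theorem coarse_map_copreserves_coarse_nbhds {X Y : Type*} [MetricSpace X] [MetricSpace Y]
    (h : X → Y)
    (hproper : ∀ D : Set Y, IsBounded D → IsBounded (h ⁻¹' D))
    (hbornologous : ∀ R : ℝ, 0 < R → ∃ S : ℝ, 0 < S ∧
      ∀ x₁ x₂ : X, dist x₁ x₂ < R → dist (h x₁) (h x₂) < S)
    (A B : Set Y) (hAB : ¬ CClose A Bᶜ) :
    ¬ CClose (h ⁻¹' A) (h ⁻¹' B)ᶜ := by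
  rintro ⟨ε, hε, hclose⟩
  -- Adding `1` makes the radius visibly positive, as bornologousness requires.
  obtain ⟨S, hS, hhS⟩ := hbornologous (ε.toReal + 1) (by positivity)
  refine hAB ⟨ENNReal.ofReal S, ENNReal.ofReal_lt_top, fun D hD => ?_⟩
  obtain ⟨x, hx, y, hy, hxy⟩ := eSetDist_lt_iff.mp (hclose _ (hproper D hD))
  refine eSetDist_lt_iff.mpr ⟨h x, hx, h y, hy, ?_⟩
  have hdist : dist x y < ε.toReal := by
    rw [dist_edist]
    exact (ENNReal.toReal_lt_toReal (edist_ne_top x y) hε.ne).mpr hxy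
  rw [edist_dist, ENNReal.ofReal_lt_ofReal_iff hS]
  exact hhS x y (by linarith)
end

section
/- Let (X, 𝓑, 𝐛) be a coarse proximity space and define the relation φ on the power set of X by: A φ B iff (for every unbounded B' ⊆ B one has A 𝐛 B') and (for every unbounded A' ⊆ A one has A' 𝐛 B). Then φ is an equivalence relation on the power set of X, and whenever A φ B and C φ D, one has (A ∪ C) φ (B ∪ D). -/
/-!
The only substantial point is transitivity. Suppose every unbounded subset of `A` is close to
`B`, and `A` is close to `C` while `B` is not. The strong axiom gives `E` with `B` far from `E`
and `Eᶜ` far from `C`. Then `A ∩ Eᶜ` is far from `C`, so `A ∩ E` is close to `C`, hence unbounded,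
hence close to `B`, contradicting that `B` is far from `E` (`CoarseProx.rel_transfer`).
Compatibility with unions holds because the bounded sets form an ideal: an unbounded subset of
`A ∪ C` meets `A` or `C` in an unbounded set (`CoarseProx.rel_union_of_subset`). The two halves
of `phi` are exchanged by symmetry, so each argument is needed for one half only.
-/

/-- A coarse proximity space: a set `X` with a bornology `bdd` and a relation `rel`
on subsets of `X` satisfying the axioms of a coarse proximity. Here `X \ E` is `Eᶜ`. -/
structure CoarseProx (X : Type*) where
  bdd : Set (Set X)
  singleton_bdd : ∀ x : X, {x} ∈ bdd
  subset_bdd : ∀ ⦃A B : Set X⦄, A ∈ bdd → B ⊆ A → B ∈ bdd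
  union_bdd : ∀ ⦃A B : Set X⦄, A ∈ bdd → B ∈ bdd → A ∪ B ∈ bdd
  rel : Set X → Set X → Prop
  symm : ∀ ⦃A B : Set X⦄, rel A B → rel B A
  union_iff : ∀ A B C : Set X, rel (A ∪ B) C ↔ rel A C ∨ rel B C
  unbounded_of_rel : ∀ ⦃A B : Set X⦄, rel A B → A ∉ bdd ∧ B ∉ bdd
  strong : ∀ ⦃A B : Set X⦄, ¬ rel A B → ∃ E : Set X, ¬ rel A E ∧ ¬ rel Eᶜ B
  rel_of_inter : ∀ ⦃A B : Set X⦄, A ∩ B ∉ bdd → rel A B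

/-- `B` is a coarse neighborhood of `A`, written `A ≪ B`. -/
def CoarseProx.nbhd {X : Type*} (P : CoarseProx X) (A B : Set X) : Prop :=
  ¬ P.rel A Bᶜ


/-- The weak asymptotic resemblance induced by a coarse proximity. -/
def CoarseProx.phi {X : Type*} (P : CoarseProx X) (A B : Set X) : Prop :=
  (∀ Bp ⊆ B, Bp ∉ P.bdd → P.rel A Bp) ∧ (∀ Ap ⊆ A, Ap ∉ P.bdd → P.rel Ap B)

/-- Monotonicity of the proximity in its first argument. -/
theorem CoarseProx.rel_mono_left {X : Type*} (P : CoarseProx X) {A A' C : Set X}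
    (h : A ⊆ A') (hr : P.rel A C) : P.rel A' C := by
  rw [← Set.union_eq_self_of_subset_left h, P.union_iff]
  exact Or.inl hr

/-- If every unbounded subset of `A` is close to `B`, then whatever is close to `A` is close
to `B`. This is where the strong axiom enters, and it is the content of transitivity. -/
theorem CoarseProx.rel_transfer {X : Type*} (P : CoarseProx X) {A B C : Set X}
    (h : ∀ A' ⊆ A, A' ∉ P.bdd → P.rel A' B) (hr : P.rel A C) : P.rel B C := by
  by_contra hn
  obtain ⟨E, hBE, hEC⟩ := P.strong hn
  rw [← Set.inter_union_compl A E, P.union_iff] at hr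
  rcases hr with hr | hr
  · have hAE := h _ Set.inter_subset_left (P.unbounded_of_rel hr).1
    exact hBE (P.symm (P.rel_mono_left Set.inter_subset_right hAE))
  · exact hEC (P.rel_mono_left Set.inter_subset_right hr)

theorem CoarseProx.phi_symm {X : Type*} (P : CoarseProx X) {A B : Set X}
    (h : P.phi A B) : P.phi B A :=
  ⟨fun S hS hu => P.symm (h.2 S hS hu), fun S hS hu => P.symm (h.1 S hS hu)⟩

/-- The second half of `phi` is compatible with unions: an unbounded subset of `A ∪ C` has
unbounded trace on `A` or on `C`. -/
theorem CoarseProx.rel_union_of_subset {X : Type*} (P : CoarseProx X) {A B C D : Set X}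
    (hAB : ∀ S ⊆ A, S ∉ P.bdd → P.rel S B) (hCD : ∀ S ⊆ C, S ∉ P.bdd → P.rel S D) :
    ∀ S ⊆ A ∪ C, S ∉ P.bdd → P.rel S (B ∪ D) := by
  intro S hS hu
  have hor : S ∩ A ∉ P.bdd ∨ S ∩ C ∉ P.bdd := by
    by_contra! hc
    apply hu
    rw [← Set.inter_eq_left.mpr hS, Set.inter_union_distrib_left]
    exact P.union_bdd hc.1 hc.2
  apply P.symm
  rw [P.union_iff]
  rcases hor with h | h
  · exact Or.inl (P.symm (P.rel_mono_left Set.inter_subset_left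
      (hAB _ Set.inter_subset_right h)))
  · exact Or.inr (P.symm (P.rel_mono_left Set.inter_subset_left
      (hCD _ Set.inter_subset_right h)))

/-- the induced relation φ is an equivalence relation on the power set
of X and is compatible with unions. -/
theorem phi_weak_asymptotic_resemblance {X : Type*} (P : CoarseProx X) :
    Equivalence P.phi ∧
    ∀ A B C D : Set X, P.phi A B → P.phi C D → P.phi (A ∪ C) (B ∪ D) := by
  refine ⟨⟨fun A => ⟨fun S hS hu => ?_, fun S hS hu => ?_⟩, P.phi_symm, ?_⟩, ?_⟩
  · exact P.rel_of_inter (by rwa [Set.inter_eq_right.mpr hS])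
  · exact P.rel_of_inter (by rwa [Set.inter_eq_left.mpr hS])
  · intro A B D hAB hBD
    exact ⟨fun S hS hu => P.rel_transfer (P.phi_symm hAB).2 (hBD.1 S hS hu),
      fun S hS hu => P.symm (P.rel_transfer hBD.2 (P.symm (hAB.2 S hS hu)))⟩
  · intro A B C D hAB hCD
    exact ⟨fun S hS hu => P.symm (P.rel_union_of_subset (P.phi_symm hAB).2
        (P.phi_symm hCD).2 S hS hu),
      P.rel_union_of_subset hAB.2 hCD.2⟩
end

section
/- Let (X,d) be a metric space and let φ be the weak asymptotic resemblance induced by the metric coarse proximity 𝐛 on X. Then for nonempty subsets A, B ⊆ X, A φ B if and only if the Hausdorff distance between A and B is finite. -/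
/-!
Both relations split into two one-sided conditions, exchanged by the symmetry of `𝐛`, so it
suffices to show, for nonempty `T`, that `S` lies in some `ε`-neighborhood of `T` iff every unbounded
`S' ⊆ S` satisfies `S' 𝐛 T`.

If `S` lies in the `ε`-neighborhood of `T` and `S' ⊆ S` is unbounded, then for bounded `D` some
`x ∈ S'` lies outside the `ε`-thickening of `D`; a point of `T` within `ε` of `x` is not in `D`.

Conversely, if `S` lies in no `ε`-neighborhood of `T`, pick `aₙ ∈ S` at distance at least `n` from
all of `T`. Then `{aₙ}` is unbounded, and removing the finite set `{aₙ : n < N}` leaves points at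
distance at least `N` from `T`, so `{aₙ} 𝐛 T` fails.
-/

open Metric Bornology
open scoped ENNReal

/-- The weak asymptotic resemblance induced by the metric coarse proximity. -/
def MPhi {X : Type*} [MetricSpace X] (A B : Set X) : Prop :=
  (∀ B' ⊆ B, ¬ IsBounded B' → CClose A B') ∧ (∀ A' ⊆ A, ¬ IsBounded A' → CClose A' B)

theorem eSetDist_comm {X : Type*} [MetricSpace X] (S T : Set X) :
    eSetDist S T = eSetDist T S := by
  refine le_antisymm ?_ ?_ <;>
  · refine le_iInf₂ fun y hy => le_iInf₂ fun x hx => ?_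
    rw [edist_comm]
    exact iInf₂_le_of_le x hx (iInf₂_le y hy)

theorem CClose.symm {X : Type*} [MetricSpace X] {S T : Set X} (h : CClose S T) :
    CClose T S := by
  obtain ⟨ε, hε, h⟩ := h
  exact ⟨ε, hε, fun D hD => by rw [eSetDist_comm]; exact h D hD⟩

theorem cClose_of_subset_nhd {X : Type*} [MetricSpace X] {S T : Set X} {ε : ℝ}
    (h : S ⊆ ⋃ y ∈ T, Metric.ball y ε) (hS : ¬ IsBounded S) : CClose S T := by
  refine ⟨ENNReal.ofReal ε, ENNReal.ofReal_lt_top, fun D hD => ?_⟩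
  have hx : ∃ x ∈ S, x ∉ D ∪ Metric.thickening ε D := by
    by_contra! hc
    exact hS ((hD.union hD.thickening).subset hc)
  obtain ⟨x, hxS, hx⟩ := hx
  obtain ⟨y, hyT, hxy⟩ := Set.mem_iUnion₂.1 (h hxS)
  have hyD : y ∉ D := fun hy => hx (Or.inr (Metric.mem_thickening_iff.2 ⟨y, hy, hxy⟩))
  have hle : eSetDist (S \ D) (T \ D) ≤ edist x y :=
    iInf₂_le_of_le x ⟨hxS, fun hd => hx (Or.inl hd)⟩ (iInf₂_le y ⟨hyT, hyD⟩)
  refine hle.trans_lt ?_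
  rw [edist_dist]
  exact (ENNReal.ofReal_lt_ofReal_iff_of_nonneg dist_nonneg).2 hxy

theorem exists_subset_nhd {X : Type*} [MetricSpace X] {S T : Set X} (hT : T.Nonempty)
    (h : ∀ S' ⊆ S, ¬ IsBounded S' → CClose S' T) :
    ∃ ε : ℝ, S ⊆ ⋃ y ∈ T, Metric.ball y ε := by
  by_contra! hc
  have key : ∀ n : ℕ, ∃ a ∈ S, ∀ y ∈ T, (n : ℝ) ≤ dist a y := by
    intro n
    obtain ⟨a, haS, ha⟩ := Set.not_subset.1 (hc n)
    refine ⟨a, haS, fun y hy => ?_⟩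
    by_contra! hlt
    exact ha (Set.mem_iUnion₂.2 ⟨y, hy, hlt⟩)
  choose a haS ha using key
  have hunb : ¬ IsBounded (Set.range a) := by
    intro hb
    obtain ⟨t, ht⟩ := hT
    obtain ⟨r, hr⟩ := hb.subset_closedBall t
    obtain ⟨n, hn⟩ := exists_nat_gt r
    have h1 : dist (a n) t ≤ r := hr ⟨n, rfl⟩
    linarith [ha n t ht]
  obtain ⟨ε, hε, hclose⟩ := h (Set.range a) (Set.range_subset_iff.2 haS) hunb
  obtain ⟨N, hN⟩ := ENNReal.exists_nat_gt hε.ne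
  refine (hclose (a '' Set.Iio N) ((Set.finite_Iio N).image a).isBounded).not_ge ?_
  refine hN.le.trans (le_iInf₂ fun x hx => le_iInf₂ fun y hy => ?_)
  obtain ⟨⟨n, rfl⟩, hn⟩ := hx
  have hNn : N ≤ n := by
    by_contra! hlt
    exact hn ⟨n, hlt, rfl⟩
  rw [edist_dist, ← ENNReal.ofReal_natCast]
  exact ENNReal.ofReal_le_ofReal ((Nat.cast_le.2 hNn).trans (ha n y hy.1))

/-- for nonempty subsets of a metric space, the weak asymptotic
resemblance induced by the metric coincides with having finite Hausdorff distance. -/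
theorem mPhi_iff_hausdorff_finite {X : Type*} [MetricSpace X] (A B : Set X)
    (hA : A.Nonempty) (hB : B.Nonempty) :
    MPhi A B ↔ HausFinite A B := by
  constructor
  · rintro ⟨h1, h2⟩
    obtain ⟨ε₁, hε₁⟩ := exists_subset_nhd hB h2
    obtain ⟨ε₂, hε₂⟩ := exists_subset_nhd hA fun B' hB' hu => (h1 B' hB' hu).symm
    exact ⟨max ε₁ ε₂,
      hε₁.trans (Set.iUnion₂_mono fun _ _ => Metric.ball_subset_ball (le_max_left _ _)),
      hε₂.trans (Set.iUnion₂_mono fun _ _ => Metric.ball_subset_ball (le_max_right _ _))⟩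
  · rintro ⟨ε, h1, h2⟩
    exact ⟨fun B' hB' hu => (cClose_of_subset_nhd (hB'.trans h2) hu).symm,
      fun A' hA' hu => cClose_of_subset_nhd (hA'.trans h1) hu⟩
end

section
/- Let (X,d₁) and (Y,d₂) be metric spaces and f : X → Y a function. Then f is a coarse map if and only if f is a coarse proximity map with respect to the metric coarse proximities, i.e., f maps metrically bounded sets to metrically bounded sets and for all A,B ⊆ X, A 𝐛₁ B implies f(A) 𝐛₂ f(B). -/
/-!
A coarse map pulls back bounded sets to bounded sets, so points of `A` and `B` that are uniformly
close outside `f ⁻¹' D` have uniformly close images outside `D`.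

Conversely, let `f` be a coarse proximity map. An unbounded set is close to itself, whereas a
bounded set is close to nothing; hence `f` is proper. If `f` were not bornologous, there would be
pairs `(x, y)` with `dist x y < R` and `dist (f x) (f y)` arbitrarily large. Properness pushes
`f x` and `f y` arbitrarily far from a base point `o` as well (`exists_far_pair`), so pairs
`(xₙ, yₙ)` can be chosen recursively with the images of the `n`-th pair much farther from `o` than
those of all previous pairs. Then `{xₙ}` and `{yₙ}` are close, but their images are not.
-/

open Metric Bornology
open scoped ENNReal

/-- Closeness expressed by real-valued distances between points. -/
theorem cclose_iff {X : Type*} [MetricSpace X] {A B : Set X} :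
    CClose A B ↔ ∃ r : ℝ, 0 < r ∧ ∀ D : Set X, IsBounded D →
      ∃ x ∈ A \ D, ∃ y ∈ B \ D, dist x y < r := by
  constructor
  · rintro ⟨ε, hε, h⟩
    refine ⟨ε.toReal + 1, by positivity, fun D hD => ?_⟩
    obtain ⟨x, hx, y, hy, hxy⟩ := eSetDist_lt_iff.1 (h D hD)
    refine ⟨x, hx, y, hy, ?_⟩
    have := ENNReal.toReal_mono hε.ne hxy.le
    rw [← dist_edist] at this
    linarith
  · rintro ⟨r, hr, h⟩
    refine ⟨ENNReal.ofReal r, ENNReal.ofReal_lt_top, fun D hD => ?_⟩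
    obtain ⟨x, hx, y, hy, hxy⟩ := h D hD
    refine eSetDist_lt_iff.2 ⟨x, hx, y, hy, ?_⟩
    rw [edist_dist]
    exact (ENNReal.ofReal_lt_ofReal_iff hr).2 hxy

theorem cclose_self_of_not_isBounded {X : Type*} [MetricSpace X] {A : Set X}
    (hA : ¬ IsBounded A) : CClose A A := by
  refine cclose_iff.2 ⟨1, one_pos, fun D hD => ?_⟩
  obtain ⟨x, hx, hxD⟩ : ∃ x ∈ A, x ∉ D :=
    Set.not_subset.1 fun h => hA (hD.subset h)
  exact ⟨x, ⟨hx, hxD⟩, x, ⟨hx, hxD⟩, by simp⟩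

/-- If a proper map sending bounded sets to bounded sets distorts some scale `R` without bound, the
badly distorted pairs can be found with images far from any base point: a pair with a point in the
bounded set `f ⁻¹' (closedBall o M)` lies in its `R`-thickening, whose image is bounded. -/
theorem exists_far_pair {X Y : Type*} [MetricSpace X] [MetricSpace Y] {f : X → Y}
    (hp : ∀ D : Set Y, IsBounded D → IsBounded (f ⁻¹' D))
    (hb : ∀ A : Set X, IsBounded A → IsBounded (f '' A)) {R : ℝ} (hR : 0 < R)
    (hf : ∀ S : ℝ, 0 < S → ∃ x y : X, dist x y < R ∧ S ≤ dist (f x) (f y)) (o : Y) (M : ℝ) :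
    ∃ p : X × X, dist p.1 p.2 < R ∧ M < dist (f p.1) (f p.2) ∧
      M < dist (f p.1) o ∧ M < dist (f p.2) o := by
  have hT : IsBounded (thickening R (f ⁻¹' closedBall o M)) :=
    (hp _ isBounded_closedBall).thickening
  obtain ⟨K, hK⟩ := (hb _ hT).subset_closedBall o
  have key : ∀ x y, dist x y < R → dist (f x) o ≤ M → dist (f x) (f y) ≤ 2 * K := by
    intro x y hxy hx
    have h1 : dist (f x) o ≤ K := hK ⟨x, self_subset_thickening hR _ hx, rfl⟩
    have h2 : dist (f y) o ≤ K :=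
      hK ⟨y, mem_thickening_iff.2 ⟨x, hx, by rwa [dist_comm]⟩, rfl⟩
    linarith [dist_triangle_right (f x) (f y) o]
  obtain ⟨x, y, hxy, hS⟩ := hf (|M| + 2 * |K| + 1) (by positivity)
  have hM := le_abs_self M
  have hK' := le_abs_self K
  have hM0 := abs_nonneg M
  have hK0 := abs_nonneg K
  refine ⟨(x, y), hxy, by dsimp only; linarith, ?_, ?_⟩
  · by_contra! h
    linarith [key x y hxy h]
  · by_contra! h
    have := key y x (by rwa [dist_comm]) h
    rw [dist_comm] at this
    linarith

/-- A map distorting some scale without bound destroys closeness of some pair of sets. -/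
theorem exists_cclose_not_cclose_image {X Y : Type*} [MetricSpace X] [MetricSpace Y] {f : X → Y}
    (hp : ∀ D : Set Y, IsBounded D → IsBounded (f ⁻¹' D))
    (hb : ∀ A : Set X, IsBounded A → IsBounded (f '' A)) {R : ℝ} (hR : 0 < R)
    (hf : ∀ S : ℝ, 0 < S → ∃ x y : X, dist x y < R ∧ S ≤ dist (f x) (f y)) :
    ∃ A B : Set X, CClose A B ∧ ¬ CClose (f '' A) (f '' B) := by
  obtain ⟨x₀, -, -⟩ := hf 1 one_pos
  let o := f x₀
  choose g hgR hgd hg1 hg2 using exists_far_pair hp hb hR hf o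
  -- The threshold `M (n + 1)` exceeds the distances from `o` to the images of the `n`-th pair
  -- `g (M n)` by at least `M n + 1`.
  let M : ℕ → ℝ := fun n => Nat.rec 0
    (fun _ r => r + 1 + dist (f (g r).1) o + dist (f (g r).2) o) n
  have hM : ∀ n, M (n + 1) = M n + 1 + dist (f (g (M n)).1) o + dist (f (g (M n)).2) o :=
    fun n => rfl
  have hstep : ∀ n, M n + 1 ≤ M (n + 1) := fun n => by
    rw [hM]
    linarith [dist_nonneg (x := f (g (M n)).1) (y := o),
      dist_nonneg (x := f (g (M n)).2) (y := o)]
  have hmono : Monotone M := monotone_nat_of_le_succ fun n => by linarith [hstep n]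
  have hge : ∀ n : ℕ, (n : ℝ) ≤ M n := by
    intro n
    induction n with
    | zero => simp [M]
    | succ k ih => push_cast; linarith [hstep k]
  have hpos : ∀ n, 0 ≤ M n := fun n => (Nat.cast_nonneg n).trans (hge n)
  have hsep : ∀ n m, min (M n) (M m) ≤ dist (f (g (M n)).1) (f (g (M m)).2) := by
    intro n m
    rcases lt_trichotomy n m with h | rfl | h
    · refine (min_le_left _ _).trans ?_
      have h1 := hmono (Nat.succ_le_of_lt h)
      rw [Nat.succ_eq_add_one, hM] at h1
      linarith [hg2 (M m), dist_triangle_left (f (g (M m)).2) o (f (g (M n)).1),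
        dist_nonneg (x := f (g (M n)).2) (y := o)]
    · simpa using (hgd (M n)).le
    · refine (min_le_right _ _).trans ?_
      have h1 := hmono (Nat.succ_le_of_lt h)
      rw [Nat.succ_eq_add_one, hM] at h1
      linarith [hg1 (M n), dist_triangle (f (g (M n)).1) (f (g (M m)).2) o,
        dist_nonneg (x := f (g (M m)).1) (y := o)]
  refine ⟨Set.range fun n => (g (M n)).1, Set.range fun n => (g (M n)).2, ?_, ?_⟩
  · refine cclose_iff.2 ⟨R, hR, fun D hD => ?_⟩
    obtain ⟨K, hK⟩ := (hb D hD).subset_closedBall o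
    obtain ⟨n, hn⟩ := exists_nat_ge K
    have hn' := hn.trans (hge n)
    refine ⟨_, ⟨⟨n, rfl⟩, fun h => ?_⟩, _, ⟨⟨n, rfl⟩, fun h => ?_⟩, hgR (M n)⟩
    · have : dist _ o ≤ K := hK ⟨_, h, rfl⟩
      linarith [hg1 (M n)]
    · have : dist _ o ≤ K := hK ⟨_, h, rfl⟩
      linarith [hg2 (M n)]
  · intro h
    obtain ⟨r, -, h⟩ := cclose_iff.1 h
    obtain ⟨N, hN⟩ := exists_nat_ge r
    obtain ⟨_, ⟨⟨_, ⟨n, rfl⟩, rfl⟩, hn⟩, _, ⟨⟨_, ⟨m, rfl⟩, rfl⟩, hm⟩, hlt⟩ :=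
      h (closedBall o (M N)) isBounded_closedBall
    -- Every pair with index below `N` has its images inside the removed ball.
    have hidx : ∀ k, M N < dist (f (g (M k)).1) o ∨ M N < dist (f (g (M k)).2) o → N ≤ k := by
      intro k hk
      by_contra! hlt
      have h1 := hmono (Nat.succ_le_of_lt hlt)
      rw [Nat.succ_eq_add_one, hM] at h1
      have h2 := dist_nonneg (x := f (g (M k)).1) (y := o)
      have h3 := dist_nonneg (x := f (g (M k)).2) (y := o)
      rcases hk with hk | hk <;> linarith [hpos k]
    have hn' := hmono (hidx n (Or.inl (by simpa using hn)))
    have hm' := hmono (hidx m (Or.inr (by simpa using hm)))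
    have := (le_min hn' hm').trans (hsep n m)
    dsimp only at hlt
    linarith [hge N]

/-- a map between metric spaces is coarse (proper and bornologous)
iff it is a coarse proximity map with respect to the metric coarse proximities. -/
theorem coarse_iff_coarse_proximity_map {X Y : Type*} [MetricSpace X] [MetricSpace Y]
    (f : X → Y) :
    ((∀ D : Set Y, IsBounded D → IsBounded (f ⁻¹' D)) ∧
      (∀ R : ℝ, 0 < R → ∃ S : ℝ, 0 < S ∧
        ∀ x₁ x₂ : X, dist x₁ x₂ < R → dist (f x₁) (f x₂) < S)) ↔
    ((∀ A : Set X, IsBounded A → IsBounded (f '' A)) ∧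
      (∀ A B : Set X, CClose A B → CClose (f '' A) (f '' B))) := by
  constructor
  · rintro ⟨hp, hf⟩
    refine ⟨fun A hA => ?_, fun A B h => ?_⟩
    · obtain ⟨C, hC⟩ := isBounded_iff.1 hA
      obtain ⟨S, -, hS⟩ := hf (|C| + 1) (by positivity)
      refine isBounded_iff.2 ⟨S, ?_⟩
      rintro _ ⟨x, hx, rfl⟩ _ ⟨y, hy, rfl⟩
      exact (hS x y (by linarith [hC hx hy, le_abs_self C])).le
    · obtain ⟨r, hr, h⟩ := cclose_iff.1 h
      obtain ⟨S, hS0, hS⟩ := hf r hr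
      refine cclose_iff.2 ⟨S, hS0, fun D hD => ?_⟩
      obtain ⟨x, ⟨hx, hxD⟩, y, ⟨hy, hyD⟩, hxy⟩ := h _ (hp D hD)
      exact ⟨f x, ⟨⟨x, hx, rfl⟩, hxD⟩, f y, ⟨⟨y, hy, rfl⟩, hyD⟩, hS x y hxy⟩
  · rintro ⟨hb, hc⟩
    have hp : ∀ D : Set Y, IsBounded D → IsBounded (f ⁻¹' D) := by
      intro D hD
      by_contra hA
      obtain ⟨r, -, h⟩ := cclose_iff.1 (hc _ _ (cclose_self_of_not_isBounded hA))
      obtain ⟨_, ⟨⟨x, hx, rfl⟩, hxD⟩, -⟩ := h D hD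
      exact hxD hx
    refine ⟨hp, fun R hR => ?_⟩
    by_contra! hf
    obtain ⟨A, B, hAB, hn⟩ := exists_cclose_not_cclose_image hp hb hR hf
    exact hn (hc A B hAB)
end

section
/- Let (X, 𝓑₁, 𝐛₁) and (Y, 𝓑₂, 𝐛₂) be coarse proximity spaces and f : X → Y a coarse proximity map (f maps sets in 𝓑₁ into 𝓑₂, and A 𝐛₁ B implies f(A) 𝐛₂ f(B)). Let φ₁ and φ₂ be the relations induced by 𝐛₁ and 𝐛₂ respectively (A φ B iff every unbounded B' ⊆ B satisfies A 𝐛 B' and every unbounded A' ⊆ A satisfies A' 𝐛 B). Then for all A, B ⊆ X, A φ₁ B implies f(A) φ₂ f(B). -/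
/-- coarse proximity maps preserve the weak asymptotic resemblance. -/
theorem coarseProxMap_preserves_phi {X Y : Type*} (P : CoarseProx X) (Q : CoarseProx Y)
    (f : X → Y)
    (hbdd : ∀ A ∈ P.bdd, f '' A ∈ Q.bdd)
    (hrel : ∀ A B : Set X, P.rel A B → Q.rel (f '' A) (f '' B))
    (A B : Set X) (h : P.phi A B) : Q.phi (f '' A) (f '' B) := by
  -- an unbounded `S ⊆ f '' C` is the image of `C ∩ f ⁻¹' S`, which is unbounded by `hbdd`
  have key : ∀ C : Set X, ∀ S ⊆ f '' C, S ∉ Q.bdd →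
      f '' (C ∩ f ⁻¹' S) = S ∧ C ∩ f ⁻¹' S ∉ P.bdd := by
    intro C S hS hSu
    have himg : f '' (C ∩ f ⁻¹' S) = S := by
      rw [Set.image_inter_preimage, Set.inter_eq_right.mpr hS]
    exact ⟨himg, fun hb => hSu (himg ▸ hbdd _ hb)⟩
  refine ⟨fun S hS hSu => ?_, fun S hS hSu => ?_⟩
  · obtain ⟨himg, hu⟩ := key B S hS hSu
    simpa only [himg] using hrel _ _ (h.1 _ Set.inter_subset_left hu)
  · obtain ⟨himg, hu⟩ := key A S hS hSu
    simpa only [himg] using hrel _ _ (h.2 _ Set.inter_subset_left hu)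
end

section
/- Let (X,d) be a metric space, x₀ ∈ X, and A ⊆ X. Then for every adequate sequence f, A ≪ U_{x₀}(A,f) with respect to the metric coarse proximity, i.e., it is not the case that A 𝐛 (X \ U_{x₀}(A,f)). -/
open Metric Bornology
open scoped ENNReal

/-- A sequence `f : ℕ → ℝ` is adequate if it is positive and `f n - f (n-1) > n + 1`
for all `n > 1`. -/
def Adequate (f : ℕ → ℝ) : Prop :=
  (∀ n : ℕ, 0 < f n) ∧ ∀ n : ℕ, 1 < n → (n : ℝ) + 1 < f n - f (n - 1)

/-- The coarse neighborhood of `A` of radius `f` relative to `x₀`: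
`U_{x₀}(A, f) = A ∪ ⋃_{n ≥ 1} (𝓑(A, n) ∖ 𝓑(x₀, f n))`, where `𝓑(A, n)` is the open
`n`-neighborhood of `A`. -/
def nbhdU {X : Type*} [MetricSpace X] (x₀ : X) (A : Set X) (f : ℕ → ℝ) : Set X :=
  A ∪ ⋃ n : ℕ, ⋃ _ : 1 ≤ n, ((⋃ a ∈ A, Metric.ball a (n : ℝ)) \ Metric.ball x₀ (f n))

/-- `U x₀ A f` is a coarse neighborhood of `A` for every adequate `f`. -/
theorem nbhdU_is_coarse_neighborhood {X : Type*} [MetricSpace X] (x₀ : X) (A : Set X) :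
    ∀ f : ℕ → ℝ, Adequate f → ¬ CClose A (nbhdU x₀ A f)ᶜ := by
  rintro f - ⟨ε, hε, h⟩
  obtain ⟨n, hn⟩ := ENNReal.exists_nat_gt hε.ne
  have hn1 : 1 ≤ n := by
    have : (0 : ℝ≥0∞) < n := (zero_le).trans_lt hn
    exact_mod_cast this
  -- Beyond the ball of radius `f n` about `x₀`, the set `U` contains the `n`-neighborhood of `A`.
  have hlt := h (ball x₀ (f n)) isBounded_ball
  simp only [eSetDist, iInf_lt_iff] at hlt
  obtain ⟨a, ha, y, hy, hay⟩ := hlt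
  apply hy.1
  refine Or.inr (Set.mem_iUnion₂.2 ⟨n, hn1, Set.mem_iUnion₂.2 ⟨a, ha.1, ?_⟩, hy.2⟩)
  rw [mem_ball', ← edist_lt_ofReal, ENNReal.ofReal_natCast]
  exact hay.trans hn
end

section
/- Let (X,d) be a metric space and x₀ ∈ X. Then for every adequate sequence f : ℕ → ℝ there exists an adequate sequence g such that for every metrically unbounded A ⊆ X one has U_{x₀}(U_{x₀}(A,g),g) ≪ U_{x₀}(A,f) with respect to the metric coarse proximity, i.e., g coarse star refines f with respect to x₀. -/
/-!
The sequence `g n = f (3 n) + 3 n` works. Suppose `x` lies in `U(U(A, g), g)` and `dist x y < k`.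
Then `y` is joined to some `a ∈ A` by a chain of at most three jumps: one of length `< k`, and
at most two of lengths `< m` and `< n`, starting at points that are at distance at least `g m`,
resp. `g n`, from `x₀`. With `N` the largest of the lengths involved, `dist y a < 3 N`. Moreover
`y` is at most `2 N` away from the start of the longest jump, so if `N = m` or `N = n` then
`dist y x₀ ≥ g N - 2 N ≥ f (3 N)`. If `N = k`, the same bound holds as soon as `x` lies outside
the ball of radius `f (3 k) + k` around `x₀`. Hence `y ∈ U(A, f)`, and removing that ball separates
`U(U(A, g), g)` from the complement of `U(A, f)` by at least `k`.
-/

open Metric Bornology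
open scoped ENNReal

theorem mem_nbhdU_iff {X : Type*} [MetricSpace X] {x₀ x : X} {A : Set X} {f : ℕ → ℝ} :
    x ∈ nbhdU x₀ A f ↔
      x ∈ A ∨ ∃ n : ℕ, 1 ≤ n ∧ ∃ a ∈ A, dist x a < n ∧ f n ≤ dist x x₀ := by
  simp only [nbhdU, Set.mem_union, Set.mem_iUnion, Set.mem_sdiff, Metric.mem_ball, not_lt]
  grind

theorem adequate_triple {f : ℕ → ℝ} (hf : Adequate f) :
    Adequate (fun n => f (3 * n) + 3 * n) := by
  refine ⟨fun n => by have := hf.1 (3 * n); positivity, fun n hn => ?_⟩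
  obtain ⟨m, rfl⟩ : ∃ m, n = m + 1 := ⟨n - 1, by omega⟩
  have h1 := hf.2 (3 * m + 1) (by omega)
  have h2 := hf.2 (3 * m + 2) (by omega)
  have h3 := hf.2 (3 * m + 3) (by omega)
  have hm : (0 : ℝ) ≤ m := Nat.cast_nonneg m
  simp only [Nat.add_sub_cancel, show 3 * m + 2 - 1 = 3 * m + 1 by omega,
    show 3 * m + 3 - 1 = 3 * m + 2 by omega, show 3 * (m + 1) = 3 * m + 3 by ring] at *
  push_cast at *
  linarith

/-- Far from `x₀`, every point within `k` of the iterated `g`-neighborhood of `A` lies in the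
`f`-neighborhood of `A`, where `g n = f (3 n) + 3 n`. -/
theorem mem_nbhdU_of_dist_lt {X : Type*} [MetricSpace X] {x₀ x y : X} {A : Set X} {f : ℕ → ℝ}
    {k : ℕ} (hk : 1 ≤ k)
    (hx : x ∈ nbhdU x₀ (nbhdU x₀ A fun n => f (3 * n) + 3 * n) fun n => f (3 * n) + 3 * n)
    (hfar : f (3 * k) + k ≤ dist x x₀) (hxy : dist x y < k) : y ∈ nbhdU x₀ A f := by
  -- It suffices to find `N ≥ 1` such that `y` is `3 N`-close to `A` and `f (3 N)`-far from `x₀`.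
  have key : ∀ N : ℕ, 1 ≤ N → ∀ a ∈ A, dist y a < 3 * N → f (3 * N) ≤ dist y x₀ →
      y ∈ nbhdU x₀ A f := fun N hN a ha h1 h2 =>
    mem_nbhdU_iff.2 (Or.inr ⟨3 * N, by omega, a, ha, by push_cast; exact h1, h2⟩)
  have hxy0 := dist_triangle x y x₀
  have hyx := dist_comm x y
  have hk1 : (1 : ℝ) ≤ k := by exact_mod_cast hk
  -- One jump of length `< m` followed by another of length `< n`; when only one of the two is
  -- present, the other is the trivial jump from a point to itself.
  have two : ∀ z, ∀ a ∈ A, ∀ m n : ℕ, dist x z < m → dist z a < n →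
      (m ≤ k ∨ f (3 * m) + 3 * m ≤ dist x x₀) → (n ≤ k ∨ f (3 * n) + 3 * n ≤ dist z x₀) →
      y ∈ nbhdU x₀ A f := by
    intro z a ha m n hxz hza hm hn
    have t1 := dist_triangle y x a
    have t2 := dist_triangle x z a
    have t3 := dist_triangle z x x₀
    have t4 := dist_comm x z
    have cast_le : ∀ {i j : ℕ}, i ≤ j → (i : ℝ) ≤ j := fun h => Nat.cast_le.2 h
    by_cases hmk : m ≤ k ∧ n ≤ k
    · have := cast_le hmk.1
      have := cast_le hmk.2
      exact key k hk a ha (by linarith) (by linarith)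
    · rcases le_total m n with h | h
      · have := cast_le h
        have hkn : k ≤ n := by omega
        have := cast_le hkn
        have := hn.resolve_left (by omega)
        exact key n (by omega) a ha (by linarith) (by linarith)
      · have := cast_le h
        have hkm : k ≤ m := by omega
        have := cast_le hkm
        have := hm.resolve_left (by omega)
        exact key m (by omega) a ha (by linarith) (by linarith)
  have triv : ∀ z : X, dist z z < (k : ℝ) := fun z => by rw [dist_self]; linarith
  rcases mem_nbhdU_iff.1 hx with hx | ⟨m, -, z, hz, hxz, hm⟩
  · rcases mem_nbhdU_iff.1 hx with hx | ⟨n, -, a, ha, hxa, hn⟩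
    · exact two x x hx k k (triv x) (triv x) (Or.inl le_rfl) (Or.inl le_rfl)
    · exact two x a ha k n (triv x) hxa (Or.inl le_rfl) (Or.inr hn)
  · rcases mem_nbhdU_iff.1 hz with hz | ⟨n, -, a, ha, hza, hn⟩
    · exact two z z hz m k hxz (triv z) (Or.inr hm) (Or.inl le_rfl)
    · exact two z a ha m n hxz hza (Or.inr hm) (Or.inr hn)

/-- every adequate sequence admits a coarse star refinement. -/
theorem exists_coarse_star_refinement {X : Type*} [MetricSpace X] (x₀ : X) :
    ∀ f : ℕ → ℝ, Adequate f → ∃ g : ℕ → ℝ, Adequate g ∧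
      ∀ A : Set X, ¬ IsBounded A →
        ¬ CClose (nbhdU x₀ (nbhdU x₀ A g) g) (nbhdU x₀ A f)ᶜ := by
  intro f hf
  refine ⟨fun n => f (3 * n) + 3 * n, adequate_triple hf, ?_⟩
  rintro A - ⟨ε, hε, h⟩
  obtain ⟨k, hk⟩ := ENNReal.exists_nat_gt hε.ne
  have hk1 : 1 ≤ k := by
    rcases Nat.eq_zero_or_pos k with rfl | h0
    · simp at hk
    · exact h0
  have hlt := (h (ball x₀ (f (3 * k) + k)) isBounded_ball).trans hk
  simp only [eSetDist, iInf_lt_iff] at hlt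
  obtain ⟨x, ⟨hx, hxD⟩, y, ⟨hy, -⟩, hxy⟩ := hlt
  refine hy (mem_nbhdU_of_dist_lt hk1 hx (by simpa using hxD) ?_)
  rw [edist_dist, ← ENNReal.ofReal_natCast] at hxy
  exact (ENNReal.ofReal_lt_ofReal_iff_of_nonneg dist_nonneg).1 hxy
end
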